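/- Let (X, d, μ) be a metric measure space with μ Borel-regular, let 1 < p < ∞, and let 𝓜 be a family of Borel measures on X with mod_p 𝓜 < ∞. Then there is a sequence (ρ_i) of admissible functions for 𝓜 converging in L^p(μ) to a Borel function ρ : X → [0, ∞] that is p-weakly admissible for 𝓜, such that ∫_X ρ_i dν → ∫_X ρ dν < ∞ for p-almost every ν ∈ 𝓜, and ∫_X ρ^p dμ = mod_p 𝓜. -/

import Mathlib

open MeasureTheory Metric Set ENNReal NNReal Filter Topology

noncomputable section

variable {X : Type*}

/-- A measure is Borel-regular: every set is contained in a Borel set of the same measure. -/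
def BorelRegular [MeasurableSpace X] (μ : Measure X) : Prop :=
  ∀ s : Set X, ∃ t : Set X, MeasurableSet t ∧ s ⊆ t ∧ μ t = μ s

/-- μ is doubling with constant `Cμ`: `0 < μ(2B) ≤ Cμ μ(B) < ∞` for all balls. -/
def IsDoublingWith [PseudoMetricSpace X] [MeasurableSpace X] (μ : Measure X) (Cμ : ℝ) : Prop :=
  ∀ (x : X) (r : ℝ), 0 < r →
    0 < μ (ball x (2 * r)) ∧ μ (ball x (2 * r)) ≤ ENNReal.ofReal Cμ * μ (ball x r) ∧
      μ (ball x r) < ⊤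

/-- `ρ` is an upper gradient of `u` on the set `V`: for every `L ≥ 0` and every
1-Lipschitz curve `γ : [0, L] → V`, `|u(γ L) − u(γ 0)| ≤ ∫₀^L ρ(γ t) dt`. -/
def IsUpperGradientOn [PseudoMetricSpace X] (u : X → ℝ) (ρ : X → ℝ≥0∞) (V : Set X) : Prop :=
  ∀ L : ℝ, 0 ≤ L → ∀ γ : ℝ → X, LipschitzOnWith 1 γ (Icc 0 L) → MapsTo γ (Icc 0 L) V →
    ENNReal.ofReal |u (γ L) - u (γ 0)| ≤ ∫⁻ t in Icc 0 L, ρ (γ t)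

/-- `X` supports a weak `p`-Poincaré inequality with constants `CP`, `lP`. -/
def WeakPoincare [PseudoMetricSpace X] [MeasurableSpace X] (μ : Measure X)
    (p CP lP : ℝ) : Prop :=
  ∀ u : X → ℝ, LocallyIntegrable u μ →
    ∀ ρ : X → ℝ≥0∞, Measurable ρ → IsUpperGradientOn u ρ univ →
    ∀ (x : X) (r : ℝ), 0 < r →
      ENNReal.ofReal (⨍ y in ball x r, |u y - ⨍ z in ball x r, u z ∂μ| ∂μ) ≤
        ENNReal.ofReal (CP * diam (ball x r)) *
          (⨍⁻ y in ball x (lP * r), ρ y ^ p ∂μ) ^ (1 / p)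

/-- `X` is Ahlfors `Q`-regular with constants `0 < a ≤ A`. -/
def AhlforsRegular [PseudoMetricSpace X] [MeasurableSpace X] (μ : Measure X)
    (Q a A : ℝ) : Prop :=
  0 < a ∧ a ≤ A ∧ ∀ (x : X) (r : ℝ), 0 < r → ENNReal.ofReal r < EMetric.diam (univ : Set X) →
    ENNReal.ofReal (a * r ^ Q) ≤ μ (ball x r) ∧ μ (ball x r) ≤ ENNReal.ofReal (A * r ^ Q)

/-- `ρ` is admissible for a family `M` of Borel measures: `∫ ρ dν ≥ 1` for all `ν ∈ M`. -/
def Admissible [MeasurableSpace X] (M : Set (Measure X)) (ρ : X → ℝ≥0∞) : Prop :=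
  Measurable ρ ∧ ∀ ν ∈ M, 1 ≤ ∫⁻ x, ρ x ∂ν

/-- The `q`-modulus of a family of Borel measures. -/
def modulus [MeasurableSpace X] (μ : Measure X) (q : ℝ) (M : Set (Measure X)) : ℝ≥0∞ :=
  ⨅ (ρ : X → ℝ≥0∞) (_ : Admissible M ρ), ∫⁻ x, ρ x ^ q ∂μ

/-- `ρ` is `q`-weakly admissible for `M`. -/
def WeaklyAdmissible [MeasurableSpace X] (μ : Measure X) (q : ℝ) (M : Set (Measure X))
    (ρ : X → ℝ≥0∞) : Prop :=
  ∃ N ⊆ M, modulus μ q N = 0 ∧ Admissible (M \ N) ρ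

/-- The family `Γ(E, F; G)` of measures `H¹` restricted to images of injective rectifiable
curves joining `E` and `F` in `G`. -/
def pathFamily [MetricSpace X] [MeasurableSpace X] [BorelSpace X] (E F G : Set X) :
    Set (Measure X) :=
  {ν | ∃ γ : ℝ → X, ContinuousOn γ (Icc 0 1) ∧ InjOn γ (Icc 0 1) ∧
    eVariationOn γ (Icc 0 1) ≠ ⊤ ∧ MapsTo γ (Icc 0 1) G ∧ γ 0 ∈ E ∧ γ 1 ∈ F ∧
    ν = (μH[1]).restrict (γ '' Icc 0 1)}

/-- `S` separates `E` from `F` in `G`: they lie in different connected components of `G \ S`. -/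
def SeparatesIn [TopologicalSpace X] (S E F G : Set X) : Prop :=
  ∃ x ∈ G \ S, ∃ y ∈ G \ S,
    E ⊆ connectedComponentIn (G \ S) x ∧ F ⊆ connectedComponentIn (G \ S) y ∧
    connectedComponentIn (G \ S) x ≠ connectedComponentIn (G \ S) y

/-- The family `Γ*(E, F; G)` of measures `H^d` restricted to `S ∩ G`, where `S` ranges over
compact subsets of the closure of `G`, of finite `H^d`-measure in `G`, separating `E` and `F`. -/
def surfaceFamilyH [MetricSpace X] [MeasurableSpace X] [BorelSpace X] (d : ℝ)
    (E F G : Set X) : Set (Measure X) :=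
  {ν | ∃ S : Set X, IsCompact S ∧ S ⊆ closure G ∧ μH[d] (S ∩ G) ≠ ⊤ ∧
    SeparatesIn S E F G ∧ ν = (μH[d]).restrict (S ∩ G)}

/-- The codimension-1 spherical Hausdorff measure associated to `μ`. -/
def codimOneHausdorff [PseudoMetricSpace X] [MeasurableSpace X] (μ : Measure X)
    (A : Set X) : ℝ≥0∞ :=
  ⨆ (δ : ℝ) (_ : 0 < δ),
    ⨅ (c : ℕ → X) (r : ℕ → ℝ) (_ : A ⊆ ⋃ i, ball (c i) (r i))
      (_ : ∀ i, 0 < r i ∧ r i ≤ δ), ∑' i, μ (ball (c i) (r i)) / ENNReal.ofReal (r i)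

/-- The integral `∫_A g d𝓗` of `g` over `A` against the codimension-1 spherical Hausdorff
measure, defined by the layer-cake formula. -/
def codimIntegral [PseudoMetricSpace X] [MeasurableSpace X] (μ : Measure X) (A : Set X)
    (g : X → ℝ≥0∞) : ℝ≥0∞ :=
  ∫⁻ s in Ioi (0 : ℝ), codimOneHausdorff μ (A ∩ {x | ENNReal.ofReal s < g x})

/-- The collection of "surfaces" of `Γ*(E, F; G)`: compact subsets of the closure of `G` of
finite codimension-1 measure in `G` separating `E` and `F` in `G`. -/
def surfaceSets [PseudoMetricSpace X] [MeasurableSpace X] (μ : Measure X) (E F G : Set X) :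
    Set (Set X) :=
  {S | IsCompact S ∧ S ⊆ closure G ∧ codimOneHausdorff μ (S ∩ G) ≠ ⊤ ∧ SeparatesIn S E F G}

/-- The `q`-modulus of a family `𝒮` of surfaces, each equipped with the codimension-1
spherical Hausdorff measure restricted to `S ∩ G`. -/
def surfModulus [PseudoMetricSpace X] [MeasurableSpace X] (μ : Measure X) (q : ℝ)
    (𝒮 : Set (Set X)) (G : Set X) : ℝ≥0∞ :=
  ⨅ (ρ : X → ℝ≥0∞)
    (_ : Measurable ρ ∧ ∀ S ∈ 𝒮, 1 ≤ codimIntegral μ (S ∩ G) ρ),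
    ∫⁻ x, ρ x ^ q ∂μ

/-- The upper Lebesgue integral of `f` over `s ⊆ ℝ`. -/
def upperIntegralOn (s : Set ℝ) (f : ℝ → ℝ≥0∞) : ℝ≥0∞ :=
  ⨅ (ψ : ℝ → ℝ≥0∞) (_ : Measurable ψ ∧ ∀ t, f t ≤ ψ t), ∫⁻ t in s, ψ t

/-- The restricted Hardy–Littlewood maximal function `M_R w`. -/
def restrMaximal [PseudoMetricSpace X] [MeasurableSpace X] (μ : Measure X) (R : ℝ)
    (w : X → ℝ≥0∞) (x : X) : ℝ≥0∞ :=
  ⨆ (r : ℝ) (_ : 0 < r ∧ r ≤ R), ⨍⁻ y in ball x r, w y ∂μ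

/-- `x` is a Lebesgue point of `v`. -/
def LebesguePoint [PseudoMetricSpace X] [MeasurableSpace X] (μ : Measure X) (v : X → ℝ)
    (x : X) : Prop :=
  Tendsto (fun r : ℝ => ⨍ y in ball x r, |v y - v x| ∂μ) (𝓝[>] 0) (𝓝 0)

/-- `u` is locally Lipschitz on `G`. -/
def IsLocallyLipschitzOn [PseudoMetricSpace X] (u : X → ℝ) (G : Set X) : Prop :=
  ∀ x ∈ G, ∃ (K : ℝ≥0) (t : Set X), t ∈ 𝓝[G] x ∧ LipschitzOnWith K u t

/-- `X` is a geodesic metric space. -/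
def IsGeodesicSpace (X : Type*) [MetricSpace X] : Prop :=
  ∀ x y : X, ∃ γ : ℝ → X, γ 0 = x ∧ γ (dist x y) = y ∧
    ∀ s ∈ Icc (0 : ℝ) (dist x y), ∀ t ∈ Icc (0 : ℝ) (dist x y), dist (γ s) (γ t) = |s - t|

/-- `G` is a domain (open connected set) with compact closure. -/
def IsDomainWithCompactClosure [TopologicalSpace X] (G : Set X) : Prop :=
  IsOpen G ∧ IsConnected G ∧ IsCompact (closure G)

/-- `E` is a nondegenerate continuum: compact, connected, with at least two points. -/
def IsNondegContinuum [TopologicalSpace X] (E : Set X) : Prop :=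
  IsCompact E ∧ IsConnected E ∧ E.Nontrivial

/-- The distance between two sets. -/
def setDist [PseudoMetricSpace X] (E F : Set X) : ℝ :=
  sInf ((fun p : X × X => dist p.1 p.2) '' (E ×ˢ F))

/-- The `s`-dimensional Hausdorff content. -/
def hContent {Y : Type*} [EMetricSpace Y] (s : ℝ) (E : Set Y) : ℝ≥0∞ :=
  ⨅ (U : ℕ → Set Y) (_ : E ⊆ ⋃ i, U i), ∑' i, EMetric.diam (U i) ^ s

end

/-!
Uniform convexity of `L^p` for `1 < p < ∞` makes every minimizing sequence of admissible functions
Cauchy in `L^p(μ)`, since midpoints of admissible functions are again admissible. Along a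
subsequence whose consecutive differences have summable `L^p`-norms, the sum `h` of these
differences is in `L^p(μ)`. By Fuglede's argument `∫ h dν < ∞` outside a family of measures `ν` of
modulus zero, and for the remaining `ν` the subsequence converges in `L^1(ν)` as well. The limit is
therefore weakly admissible, and its energy is the limit of the energies.
-/

section EDist

theorem edist_eq_max_tsub (a b : ℝ≥0∞) : edist a b = max (a - b) (b - a) := by
  cases a with
  | top =>
    cases b with
    | top => rw [WeakPseudoEMetricSpace.edist_self, tsub_self, max_self]
    | coe b => rw [ENNReal.top_sub_coe, max_eq_left le_top]; rfl
  | coe a =>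
    cases b with
    | top => rw [ENNReal.top_sub_coe, max_eq_right le_top]; rfl
    | coe b =>
      calc edist (a : ℝ≥0∞) b = (nndist a b : ℝ≥0) := edist_nndist a b
        _ = max ((a : ℝ≥0∞) - b) (b - a) := by rw [NNReal.nndist_eq]; push_cast; rfl

theorem edist_le_iff_le_add {a b c : ℝ≥0∞} : edist a b ≤ c ↔ a ≤ b + c ∧ b ≤ a + c := by
  rw [edist_eq_max_tsub, max_le_iff, tsub_le_iff_left, tsub_le_iff_left]

theorem tendsto_of_tendsto_edist_zero {ι : Type*} {l : Filter ι} {u : ι → ℝ≥0∞} {a : ℝ≥0∞}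
    (h : Tendsto (fun i ↦ edist (u i) a) l (𝓝 0)) : Tendsto u l (𝓝 a) := by
  have lower : Tendsto (fun i ↦ a - edist (u i) a) l (𝓝 a) := by
    simpa using ENNReal.Tendsto.sub tendsto_const_nhds h (Or.inr zero_ne_top)
  have upper : Tendsto (fun i ↦ a + edist (u i) a) l (𝓝 a) := by
    simpa using h.const_add a
  refine tendsto_of_tendsto_of_tendsto_of_le_of_le lower upper (fun i ↦ ?_) (fun i ↦ ?_)
  · exact tsub_le_iff_right.2 (edist_le_iff_le_add.1 le_rfl).2
  · exact (edist_le_iff_le_add.1 le_rfl).1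

theorem edist_add_le_tsum_edist (u : ℕ → ℝ≥0∞) (k n : ℕ) :
    edist (u k) (u (k + n)) ≤ ∑' i, edist (u (i + k)) (u (i + k + 1)) := by
  have partial_sum : edist (u k) (u (k + n)) ≤
      ∑ i ∈ Finset.range n, edist (u (i + k)) (u (i + k + 1)) := by
    induction n with
    | zero => simp [WeakPseudoEMetricSpace.edist_self]
    | succ n ih =>
      rw [Finset.sum_range_succ, add_comm n k]
      exact (WeakPseudoEMetricSpace.edist_triangle _ (u (k + n)) _).trans (by gcongr; rfl)
  exact partial_sum.trans (ENNReal.sum_le_tsum _)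

theorem edist_liminf_le_tsum_edist (u : ℕ → ℝ≥0∞) (k : ℕ) :
    edist (u k) (liminf u atTop) ≤ ∑' i, edist (u (i + k)) (u (i + k + 1)) := by
  have near : ∀ᶠ j in atTop, edist (u k) (u j) ≤ ∑' i, edist (u (i + k)) (u (i + k + 1)) := by
    filter_upwards [eventually_ge_atTop k] with j hj
    obtain ⟨n, rfl⟩ := Nat.exists_eq_add_of_le hj
    exact edist_add_le_tsum_edist u k n
  simp only [edist_le_iff_le_add] at near ⊢
  constructor
  · rw [← tsub_le_iff_right]
    exact le_liminf_of_le (by isBoundedDefault) (near.mono fun j hj ↦ tsub_le_iff_right.2 hj.1)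
  · exact liminf_le_of_le (by isBoundedDefault) fun b hb ↦
      let ⟨j, hbj, hj⟩ := (hb.and near).exists; hbj.trans hj.2

theorem tendsto_edist_liminf_zero {u : ℕ → ℝ≥0∞} (hu : ∑' i, edist (u i) (u (i + 1)) ≠ ⊤) :
    Tendsto (fun k ↦ edist (u k) (liminf u atTop)) atTop (𝓝 0) :=
  tendsto_of_tendsto_of_tendsto_of_le_of_le tendsto_const_nhds (ENNReal.tendsto_sum_nat_add _ hu)
    (fun _ ↦ zero_le) (edist_liminf_le_tsum_edist u)

end EDist

section UniformConvexity

theorem exists_le_mul_of_isCompact {Y : Type*} [TopologicalSpace Y] {K : Set Y} (hK : IsCompact K)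
    {F G : Y → ℝ} (hF : ContinuousOn F K) (hG : ContinuousOn G K) (hF_nonneg : ∀ y ∈ K, 0 ≤ F y)
    (hG_neg : ∀ y ∈ K, F y = 0 → G y < 0) :
    ∃ C, 0 ≤ C ∧ ∀ y ∈ K, G y ≤ C * F y := by
  suffices ∃ C, 0 ≤ C ∧ ∀ y ∈ K, y ∈ K → G y ≤ C * F y by simpa using this
  refine hK.induction_on (p := fun S ↦ ∃ C, 0 ≤ C ∧ ∀ y ∈ S, y ∈ K → G y ≤ C * F y)
    ⟨0, le_rfl, by simp⟩ ?_ ?_ fun y hy ↦ ?_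
  · rintro S T hST ⟨C, hC, h⟩
    exact ⟨C, hC, fun y hy ↦ h y (hST hy)⟩
  · rintro S T ⟨C, hC, hS⟩ ⟨D, -, hT⟩
    refine ⟨max C D, le_max_of_le_left hC, ?_⟩
    rintro y (hy | hy) hyK
    · exact (hS y hy hyK).trans (by gcongr; exacts [hF_nonneg y hyK, le_max_left C D])
    · exact (hT y hy hyK).trans (by gcongr; exacts [hF_nonneg y hyK, le_max_right C D])
  · obtain ⟨C, hC, hlt⟩ : ∃ C, 0 ≤ C ∧ G y < C * F y := by
      rcases (hF_nonneg y hy).eq_or_lt with h0 | hpos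
      · exact ⟨0, le_rfl, by simpa using hG_neg y hy h0.symm⟩
      · refine ⟨(|G y| + 1) / F y, by positivity, ?_⟩
        rw [div_mul_cancel₀ _ hpos.ne']
        linarith [le_abs_self (G y)]
    exact ⟨_, (hG y hy).eventually_lt ((hF y hy).const_mul C) hlt, C, hC, fun z hz _ ↦ le_of_lt hz⟩

theorem half_rpow_lt_of_ne_half {p x : ℝ} (hp : 1 < p) (hx : x ∈ Icc (0 : ℝ) 1) (hne : x ≠ 1 / 2) :
    (1 / 2 : ℝ) ^ p < (x ^ p + (1 - x) ^ p) / 2 := by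
  have convex := (strictConvexOn_rpow hp).2 (mem_Ici.2 hx.1) (mem_Ici.2 (sub_nonneg.2 hx.2))
    (fun h ↦ hne (by linarith)) one_half_pos one_half_pos (add_halves 1)
  simp only [smul_eq_mul] at convex
  rw [show 1 / 2 * x + 1 / 2 * (1 - x) = 1 / 2 by ring] at convex
  linarith

/-- Uniform convexity: up to `ε`, the convexity gap at the midpoint controls `|s - t| ^ p`. The gap
is split over both sides because the inequality is later used in `ℝ≥0∞`. -/
theorem exists_abs_sub_rpow_add_le {p ε : ℝ} (hp : 1 < p) (hε : 0 < ε) :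
    ∃ C, 0 ≤ C ∧ ∀ s t : ℝ, 0 ≤ s → 0 ≤ t →
      |s - t| ^ p + C * ((s + t) / 2) ^ p ≤ ε * (s ^ p + t ^ p) + C * ((s ^ p + t ^ p) / 2) := by
  have hp0 : 0 < p := by linarith
  have cont_rpow : Continuous fun x : ℝ ↦ x ^ p := Real.continuous_rpow_const hp0.le
  -- By homogeneity it suffices to treat `s + t = 1`.
  obtain ⟨C, hC, normalized⟩ := exists_le_mul_of_isCompact (isCompact_Icc (a := (0 : ℝ)) (b := 1))
    (F := fun x ↦ (x ^ p + (1 - x) ^ p) / 2 - (1 / 2) ^ p)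
    (G := fun x ↦ |x - (1 - x)| ^ p - ε * (x ^ p + (1 - x) ^ p))
    (by fun_prop) (by fun_prop)
    (fun x hx ↦ by
      rcases eq_or_ne x (1 / 2) with rfl | hne
      · norm_num
      · exact sub_nonneg.2 (half_rpow_lt_of_ne_half hp hx hne).le)
    (fun x hx hFx ↦ by
      obtain rfl : x = 1 / 2 := by
        by_contra hne
        exact (sub_pos.2 (half_rpow_lt_of_ne_half hp hx hne)).ne' hFx
      norm_num [Real.zero_rpow hp0.ne']
      positivity)
  refine ⟨C, hC, fun s t hs ht ↦ ?_⟩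
  rcases (add_nonneg hs ht).eq_or_lt with h0 | hpos
  · obtain ⟨rfl, rfl⟩ := (add_eq_zero_iff_of_nonneg hs ht).1 h0.symm
    simp [Real.zero_rpow hp0.ne']
  · obtain ⟨x, r, hx, hr, rfl, rfl⟩ : ∃ x r : ℝ, x ∈ Icc 0 1 ∧ 0 < r ∧ s = r * x ∧
        t = r * (1 - x) :=
      ⟨s / (s + t), s + t, ⟨by positivity, (div_le_one hpos).2 (by linarith)⟩, hpos,
        by field_simp, by field_simp; ring⟩
    have h1x : 0 ≤ 1 - x := sub_nonneg.2 hx.2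
    rw [← mul_sub, ← mul_add, abs_mul, abs_of_pos hr, add_sub_cancel, mul_div_assoc,
      Real.mul_rpow hr.le (abs_nonneg _), Real.mul_rpow hr.le (by norm_num),
      Real.mul_rpow hr.le hx.1, Real.mul_rpow hr.le h1x]
    linear_combination r ^ p * normalized x hx

theorem exists_edist_rpow_add_le {p : ℝ} (hp : 1 < p) {ε : ℝ≥0} (hε : 0 < ε) :
    ∃ C : ℝ≥0, ∀ s t : ℝ≥0∞,
      edist s t ^ p + C * ((s + t) / 2) ^ p ≤ ε * (s ^ p + t ^ p) + C * ((s ^ p + t ^ p) / 2) := by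
  have hp0 : 0 < p := by linarith
  obtain ⟨C, hC, h⟩ := exists_abs_sub_rpow_add_le hp (NNReal.coe_pos.2 hε)
  lift C to ℝ≥0 using hC
  have hε' : (ε : ℝ≥0∞) ≠ 0 := by exact_mod_cast hε.ne'
  refine ⟨C, fun s t ↦ ?_⟩
  cases s with
  | top => simp [ENNReal.top_rpow_of_pos hp0, ENNReal.mul_top hε']
  | coe s =>
    cases t with
    | top => simp [ENNReal.top_rpow_of_pos hp0, ENNReal.mul_top hε']
    | coe t =>
      have edist_coe : edist (s : ℝ≥0∞) t = (nndist s t : ℝ≥0) := edist_nndist s t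
      rw [edist_coe, ← ENNReal.coe_two]
      simp only [← ENNReal.coe_rpow_of_nonneg _ hp0.le, ← ENNReal.coe_add,
        ← ENNReal.coe_div two_ne_zero, ← ENNReal.coe_mul, ENNReal.coe_le_coe, ← NNReal.coe_le_coe]
      push_cast
      exact h s t s.2 t.2

end UniformConvexity

section Lp

variable {X : Type*} [MeasurableSpace X] {μ : Measure X} {p : ℝ}

theorem measurable_edist_ennreal {f g : X → ℝ≥0∞} (hf : Measurable f) (hg : Measurable g) :
    Measurable fun x ↦ edist (f x) (g x) := by
  simp only [edist_eq_max_tsub]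
  exact (hf.sub hg).max (hg.sub hf)

theorem exists_lintegral_edist_rpow_add_le (μ : Measure X) (hp : 1 < p) {ε : ℝ≥0} (hε : 0 < ε) :
    ∃ C : ℝ≥0, ∀ f g : X → ℝ≥0∞, Measurable f → Measurable g →
      ∫⁻ x, edist (f x) (g x) ^ p ∂μ + C * ∫⁻ x, ((f x + g x) / 2) ^ p ∂μ ≤
        ε * (∫⁻ x, f x ^ p ∂μ + ∫⁻ x, g x ^ p ∂μ) +
          C * ((∫⁻ x, f x ^ p ∂μ + ∫⁻ x, g x ^ p ∂μ) / 2) := by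
  obtain ⟨C, hC⟩ := exists_edist_rpow_add_le hp hε
  refine ⟨C, fun f g hf hg ↦ ?_⟩
  have hfp : Measurable fun x ↦ f x ^ p := hf.pow_const p
  have hsum : Measurable fun x ↦ f x ^ p + g x ^ p := hfp.add (hg.pow_const p)
  have integrated := lintegral_mono (μ := μ) fun x ↦ hC (f x) (g x)
  rw [lintegral_add_left ((measurable_edist_ennreal hf hg).pow_const p),
    lintegral_const_mul' _ _ ENNReal.coe_ne_top, lintegral_add_left (hsum.const_mul _),
    lintegral_const_mul' _ _ ENNReal.coe_ne_top, lintegral_const_mul' _ _ ENNReal.coe_ne_top]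
    at integrated
  simpa only [div_eq_mul_inv, lintegral_mul_const _ hsum, lintegral_add_left hfp] using integrated

theorem lintegral_Lp_tsum_le (hp : 1 ≤ p) {f : ℕ → X → ℝ≥0∞} (hf : ∀ n, AEMeasurable (f n) μ) :
    (∫⁻ x, (∑' n, f n x) ^ p ∂μ) ^ (1 / p) ≤ ∑' n, (∫⁻ x, f n x ^ p ∂μ) ^ (1 / p) := by
  have hp0 : 0 < p := by linarith
  have partial_sums (n : ℕ) : (∫⁻ x, (∑ i ∈ Finset.range n, f i x) ^ p ∂μ) ^ (1 / p) ≤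
      ∑' n, (∫⁻ x, f n x ^ p ∂μ) ^ (1 / p) := by
    have minkowski := eLpNorm'_sum_le (s := Finset.range n)
      (fun i _ ↦ (hf i).aestronglyMeasurable) hp
    simp only [eLpNorm', enorm_eq_self, Finset.sum_apply] at minkowski
    exact minkowski.trans (ENNReal.sum_le_tsum _)
  have monotone_convergence : Tendsto (fun n ↦ ∫⁻ x, (∑ i ∈ Finset.range n, f i x) ^ p ∂μ) atTop
      (𝓝 (∫⁻ x, (∑' n, f n x) ^ p ∂μ)) := by
    refine lintegral_tendsto_of_tendsto_of_monotone
      (fun n ↦ (Finset.aemeasurable_fun_sum _ fun i _ ↦ hf i).pow_const p)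
      (.of_forall fun x m n hmn ↦ ?_) (.of_forall fun x ↦ ?_)
    · exact ENNReal.rpow_le_rpow
        (Finset.sum_le_sum_of_subset (Finset.range_subset_range.2 hmn)) hp0.le
    · exact (ENNReal.continuous_rpow_const.tendsto _).comp (ENNReal.tendsto_nat_tsum _)
  exact le_of_tendsto' ((ENNReal.continuous_rpow_const.tendsto _).comp monotone_convergence)
    partial_sums

theorem edist_lintegral_Lp_le (hp : 1 ≤ p) {f g : X → ℝ≥0∞} (hf : Measurable f)
    (hg : Measurable g) :
    edist ((∫⁻ x, f x ^ p ∂μ) ^ (1 / p)) ((∫⁻ x, g x ^ p ∂μ) ^ (1 / p)) ≤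
      (∫⁻ x, edist (f x) (g x) ^ p ∂μ) ^ (1 / p) := by
  have hfg := (measurable_edist_ennreal hf hg).aemeasurable (μ := μ)
  refine edist_le_iff_le_add.2 ⟨le_trans ?_ (ENNReal.lintegral_Lp_add_le hg.aemeasurable hfg hp),
    le_trans ?_ (ENNReal.lintegral_Lp_add_le hf.aemeasurable hfg hp)⟩
  · gcongr with x
    exact (edist_le_iff_le_add.1 le_rfl).1
  · gcongr with x
    exact (edist_le_iff_le_add.1 le_rfl).2

theorem tendsto_lintegral_rpow_of_tendsto_edist {ι : Type*} {l : Filter ι} (hp : 1 ≤ p)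
    {f : ι → X → ℝ≥0∞} {g : X → ℝ≥0∞} (hf : ∀ i, Measurable (f i)) (hg : Measurable g)
    (h : Tendsto (fun i ↦ ∫⁻ x, edist (f i x) (g x) ^ p ∂μ) l (𝓝 0)) :
    Tendsto (fun i ↦ ∫⁻ x, f i x ^ p ∂μ) l (𝓝 (∫⁻ x, g x ^ p ∂μ)) := by
  have hp0 : 0 < p := by linarith
  have norm_edist : Tendsto (fun i ↦ (∫⁻ x, edist (f i x) (g x) ^ p ∂μ) ^ (1 / p)) l (𝓝 0) := by
    simpa [hp0] using h.ennrpow_const (1 / p)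
  have norms : Tendsto (fun i ↦ (∫⁻ x, f i x ^ p ∂μ) ^ (1 / p)) l
      (𝓝 ((∫⁻ x, g x ^ p ∂μ) ^ (1 / p))) :=
    tendsto_of_tendsto_edist_zero <| tendsto_of_tendsto_of_tendsto_of_le_of_le tendsto_const_nhds
      norm_edist (fun _ ↦ zero_le) fun i ↦ edist_lintegral_Lp_le hp (hf i) hg
  simpa [ENNReal.rpow_inv_rpow hp0.ne'] using norms.ennrpow_const p

theorem exists_subseq_lintegral_tsum_edist_rpow_ne_top (hp : 1 ≤ p) {f : ℕ → X → ℝ≥0∞}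
    (hf : ∀ n, Measurable (f n))
    (hcauchy : Tendsto (fun k : ℕ × ℕ ↦ ∫⁻ x, edist (f k.1 x) (f k.2 x) ^ p ∂μ)
      (atTop ×ˢ atTop) (𝓝 0)) :
    ∃ φ : ℕ → ℕ, StrictMono φ ∧
      ∫⁻ x, (∑' n, edist (f (φ n) x) (f (φ (n + 1)) x)) ^ p ∂μ ≠ ⊤ := by
  have hp0 : 0 < p := by linarith
  have norms : Tendsto (fun k : ℕ × ℕ ↦ (∫⁻ x, edist (f k.1 x) (f k.2 x) ^ p ∂μ) ^ (1 / p))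
      (atTop ×ˢ atTop) (𝓝 0) := by
    simpa [hp0] using hcauchy.ennrpow_const (1 / p)
  obtain ⟨φ, hφ, hφ_le⟩ := extraction_forall_of_eventually'
    (P := fun n k ↦ ∀ j ≥ k, (∫⁻ x, edist (f k x) (f j x) ^ p ∂μ) ^ (1 / p) ≤ 2⁻¹ ^ n) fun n ↦ by
      have hpos : (0 : ℝ≥0∞) < 2⁻¹ ^ n := ENNReal.pow_pos (by simp) n
      rw [prod_atTop_atTop_eq] at norms
      obtain ⟨⟨K, L⟩, hKL⟩ := eventually_atTop.1 (norms.eventually_le_const hpos)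
      exact ⟨max K L, fun k hk j hj ↦
        hKL (k, j) ⟨(le_max_left K L).trans hk, (le_max_right K L).trans (hk.trans hj)⟩⟩
  have norm_le : (∫⁻ x, (∑' n, edist (f (φ n) x) (f (φ (n + 1)) x)) ^ p ∂μ) ^ (1 / p) ≤ 2 :=
    calc _ ≤ ∑' n, (∫⁻ x, edist (f (φ n) x) (f (φ (n + 1)) x) ^ p ∂μ) ^ (1 / p) :=
          lintegral_Lp_tsum_le hp fun n ↦ (measurable_edist_ennreal (hf _) (hf _)).aemeasurable
      _ ≤ ∑' n, 2⁻¹ ^ n := ENNReal.tsum_le_tsum fun n ↦ hφ_le n _ (hφ.monotone n.le_succ)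
      _ = 2 := by rw [ENNReal.tsum_geometric, ENNReal.one_sub_inv_two, inv_inv]
  refine ⟨φ, hφ, fun htop ↦ ?_⟩
  rw [htop, ENNReal.top_rpow_of_pos (by positivity)] at norm_le
  exact absurd norm_le (by simp)

theorem tendsto_lintegral_edist_liminf_rpow (hp : 0 < p) {f : ℕ → X → ℝ≥0∞}
    (hf : ∀ n, Measurable (f n))
    (hfin : ∫⁻ x, (∑' n, edist (f n x) (f (n + 1) x)) ^ p ∂μ ≠ ⊤) :
    Tendsto (fun k ↦ ∫⁻ x, edist (f k x) (liminf (fun n ↦ f n x) atTop) ^ p ∂μ) atTop (𝓝 0) := by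
  let h (x : X) : ℝ≥0∞ := ∑' n, edist (f n x) (f (n + 1) x)
  have dominated (k : ℕ) (x : X) :
      edist (f k x) (liminf (fun n ↦ f n x) atTop) ^ p ≤ h x ^ p := by
    gcongr
    exact (edist_liminf_le_tsum_edist (f · x) k).trans (ENNReal.tsum_comp_le_tsum_of_injective
      (add_left_injective k) fun n ↦ edist (f n x) (f (n + 1) x))
  have pointwise : ∀ᵐ x ∂μ, Tendsto (fun k ↦ edist (f k x) (liminf (fun n ↦ f n x) atTop) ^ p)
      atTop (𝓝 0) := by
    have hh : Measurable fun x ↦ h x ^ p :=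
      (Measurable.tsum fun n ↦ measurable_edist_ennreal (hf n) (hf (n + 1))).pow_const p
    filter_upwards [ae_lt_top hh hfin] with x hx
    have hx_fin : h x ≠ ⊤ := fun htop ↦ by simp [htop, hp] at hx
    simpa [hp] using (tendsto_edist_liminf_zero hx_fin).ennrpow_const p
  simpa using tendsto_lintegral_of_dominated_convergence _
    (fun k ↦ (measurable_edist_ennreal (hf k) (.liminf hf)).pow_const p)
    (fun k ↦ .of_forall (dominated k)) hfin pointwise

end Lp

section Modulus

variable {X : Type*} [MeasurableSpace X] {μ : Measure X} {p : ℝ} {M N : Set (Measure X)}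

theorem Admissible.midpoint {f g : X → ℝ≥0∞} (hf : Admissible M f) (hg : Admissible M g) :
    Admissible M fun x ↦ (f x + g x) / 2 := by
  have hfg : Measurable fun x ↦ f x + g x := hf.1.add hg.1
  refine ⟨hfg.div_const 2, fun ν hν ↦ ?_⟩
  simp only [div_eq_mul_inv]
  rw [lintegral_mul_const _ hfg, lintegral_add_left hf.1, ← div_eq_mul_inv,
    ENNReal.le_div_iff_mul_le (by simp) (by simp), one_mul, ← one_add_one_eq_two]
  exact add_le_add (hf.2 ν hν) (hg.2 ν hν)

theorem modulus_le_lintegral {f : X → ℝ≥0∞} (hf : Admissible M f) :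
    modulus μ p M ≤ ∫⁻ x, f x ^ p ∂μ :=
  iInf₂_le f hf

theorem modulus_mono (hMN : M ⊆ N) : modulus μ p M ≤ modulus μ p N :=
  le_iInf₂ fun _ hf ↦ modulus_le_lintegral ⟨hf.1, fun ν hν ↦ hf.2 ν (hMN hν)⟩

theorem modulus_union_le (hp : 0 ≤ p) : modulus μ p (M ∪ N) ≤ modulus μ p M + modulus μ p N := by
  simp only [modulus, ENNReal.iInf_add, ENNReal.add_iInf, le_iInf_iff]
  intro g hg f hf
  have hmax : Admissible (M ∪ N) fun x ↦ max (f x) (g x) := by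
    refine ⟨hf.1.max hg.1, ?_⟩
    rintro ν (hν | hν)
    · exact (hf.2 ν hν).trans (lintegral_mono fun x ↦ le_max_left _ _)
    · exact (hg.2 ν hν).trans (lintegral_mono fun x ↦ le_max_right _ _)
  calc modulus μ p (M ∪ N) ≤ ∫⁻ x, max (f x) (g x) ^ p ∂μ := modulus_le_lintegral hmax
    _ ≤ ∫⁻ x, f x ^ p + g x ^ p ∂μ := lintegral_mono fun x ↦ by
      rw [ENNReal.max_rpow hp]
      exact max_le_add_of_nonneg zero_le zero_le
    _ = ∫⁻ x, f x ^ p ∂μ + ∫⁻ x, g x ^ p ∂μ := lintegral_add_left (hf.1.pow_const p) _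

theorem modulus_setOf_lintegral_eq_top (hp : 0 < p) {g : X → ℝ≥0∞} (hg : Measurable g)
    (hfin : ∫⁻ x, g x ^ p ∂μ ≠ ⊤) : modulus μ p {ν | ∫⁻ x, g x ∂ν = ⊤} = 0 := by
  have le_scaled (n : ℕ) :
      modulus μ p {ν | ∫⁻ x, g x ∂ν = ⊤} ≤ (n : ℝ≥0∞)⁻¹ ^ p * ∫⁻ x, g x ^ p ∂μ := by
    have hadm : Admissible {ν | ∫⁻ x, g x ∂ν = ⊤} fun x ↦ (n : ℝ≥0∞)⁻¹ * g x := by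
      refine ⟨hg.const_mul _, fun ν (hν : ∫⁻ x, g x ∂ν = ⊤) ↦ ?_⟩
      rw [lintegral_const_mul _ hg, hν, ENNReal.mul_top (by simp)]
      exact le_top
    refine (modulus_le_lintegral hadm).trans_eq ?_
    simp only [ENNReal.mul_rpow_of_nonneg _ _ hp.le]
    rw [lintegral_const_mul _ (hg.pow_const p)]
  have scaled_tendsto :
      Tendsto (fun n : ℕ ↦ (n : ℝ≥0∞)⁻¹ ^ p * ∫⁻ x, g x ^ p ∂μ) atTop (𝓝 0) := by
    simpa [hp] using
      ENNReal.Tendsto.mul_const (ENNReal.tendsto_inv_nat_nhds_zero.ennrpow_const p) (Or.inr hfin)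
  exact le_antisymm (ge_of_tendsto' scaled_tendsto le_scaled) zero_le

theorem exists_subseq_tendsto_lintegral_edist (hp : 1 ≤ p) {f : ℕ → X → ℝ≥0∞}
    (hf : ∀ n, Measurable (f n))
    (hcauchy : Tendsto (fun k : ℕ × ℕ ↦ ∫⁻ x, edist (f k.1 x) (f k.2 x) ^ p ∂μ)
      (atTop ×ˢ atTop) (𝓝 0)) :
    ∃ (φ : ℕ → ℕ) (ρ : X → ℝ≥0∞), StrictMono φ ∧ Measurable ρ ∧
      Tendsto (fun k ↦ ∫⁻ x, edist (f (φ k) x) (ρ x) ^ p ∂μ) atTop (𝓝 0) ∧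
      modulus μ p {ν | ¬ Tendsto (fun k ↦ ∫⁻ x, edist (f (φ k) x) (ρ x) ∂ν) atTop (𝓝 0)} = 0 := by
  have hp0 : 0 < p := by linarith
  obtain ⟨φ, hφ, hfin⟩ := exists_subseq_lintegral_tsum_edist_rpow_ne_top hp hf hcauchy
  have hfφ (n : ℕ) : Measurable (f (φ n)) := hf (φ n)
  refine ⟨φ, fun x ↦ liminf (fun n ↦ f (φ n) x) atTop, hφ, .liminf hfφ,
    tendsto_lintegral_edist_liminf_rpow hp0 hfφ hfin, le_antisymm ?_ zero_le⟩
  have hsum : Measurable fun x ↦ ∑' n, edist (f (φ n) x) (f (φ (n + 1)) x) :=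
    .tsum fun n ↦ measurable_edist_ennreal (hfφ n) (hfφ (n + 1))
  refine (modulus_mono fun ν hν ↦ ?_).trans_eq (modulus_setOf_lintegral_eq_top hp0 hsum hfin)
  by_contra hνfin
  refine hν ?_
  simpa using tendsto_lintegral_edist_liminf_rpow one_pos hfφ (μ := ν) (by simpa using hνfin)

theorem modulus_setOf_not_tendsto_lintegral {ι : Type*} {l : Filter ι} (hp : 0 < p)
    {f : ι → X → ℝ≥0∞} {g : X → ℝ≥0∞} (hf : ∀ i, Measurable (f i)) (hg : Measurable g)
    (hfin : ∫⁻ x, g x ^ p ∂μ ≠ ⊤)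
    (hnull : modulus μ p {ν | ¬ Tendsto (fun i ↦ ∫⁻ x, edist (f i x) (g x) ∂ν) l (𝓝 0)} = 0) :
    modulus μ p {ν | ¬ (∫⁻ x, g x ∂ν ≠ ⊤ ∧
      Tendsto (fun i ↦ ∫⁻ x, f i x ∂ν) l (𝓝 (∫⁻ x, g x ∂ν)))} = 0 := by
  let I : Set (Measure X) := {ν | ∫⁻ x, g x ∂ν = ⊤}
  let D : Set (Measure X) := {ν | ¬ Tendsto (fun i ↦ ∫⁻ x, edist (f i x) (g x) ∂ν) l (𝓝 0)}
  have union_null : modulus μ p (I ∪ D) ≤ 0 := (modulus_union_le hp.le).trans_eq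
    (by rw [modulus_setOf_lintegral_eq_top hp hg hfin, hnull, add_zero])
  refine le_antisymm (.trans (modulus_mono fun ν hν ↦ ?_) union_null) zero_le
  by_contra hID
  obtain ⟨hI, hD⟩ : ν ∉ I ∧ ν ∉ D := not_or.1 hID
  refine hν ⟨hI, ?_⟩
  simpa using tendsto_lintegral_rpow_of_tendsto_edist le_rfl hf hg (by simpa [D] using hD)

theorem exists_seq_admissible_tendsto_modulus (hM : modulus μ p M ≠ ⊤) :
    ∃ f : ℕ → X → ℝ≥0∞, (∀ n, Admissible M (f n)) ∧
      Tendsto (fun n ↦ ∫⁻ x, f n x ^ p ∂μ) atTop (𝓝 (modulus μ p M)) := by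
  let energies : Set ℝ≥0∞ := (fun f ↦ ∫⁻ x, f x ^ p ∂μ) '' {f | Admissible M f}
  have modulus_eq : modulus μ p M = sInf energies := sInf_image.symm
  have nonempty : energies.Nonempty := by
    by_contra hempty
    exact hM (by rw [modulus_eq, not_nonempty_iff_eq_empty.1 hempty, _root_.sInf_empty])
  obtain ⟨u, -, hu, hmem⟩ := exists_seq_tendsto_sInf nonempty (OrderBot.bddBelow _)
  choose f hf hfu using hmem
  exact ⟨f, hf, by simpa only [modulus_eq, hfu] using hu⟩

theorem tendsto_lintegral_edist_rpow_of_tendsto_modulus {ι : Type*} {l : Filter ι} (hp : 1 < p)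
    (hM : modulus μ p M ≠ ⊤) {f g : ι → X → ℝ≥0∞} (hf : ∀ i, Admissible M (f i))
    (hg : ∀ i, Admissible M (g i))
    (hf_lim : Tendsto (fun i ↦ ∫⁻ x, f i x ^ p ∂μ) l (𝓝 (modulus μ p M)))
    (hg_lim : Tendsto (fun i ↦ ∫⁻ x, g i x ^ p ∂μ) l (𝓝 (modulus μ p M))) :
    Tendsto (fun i ↦ ∫⁻ x, edist (f i x) (g i x) ^ p ∂μ) l (𝓝 0) := by
  refine ENNReal.tendsto_nhds_zero.2 fun e he ↦ ?_
  obtain ⟨ε, hε, hε_lt⟩ : ∃ ε : ℝ≥0, 0 < ε ∧ ε * (modulus μ p M + modulus μ p M) < e :=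
    ENNReal.exists_nnreal_pos_mul_lt (by finiteness) he.ne'
  obtain ⟨C, hC⟩ := exists_lintegral_edist_rpow_add_le μ hp hε
  have energies : Tendsto (fun i ↦ ∫⁻ x, f i x ^ p ∂μ + ∫⁻ x, g i x ^ p ∂μ) l
      (𝓝 (modulus μ p M + modulus μ p M)) := hf_lim.add hg_lim
  have upper : Tendsto (fun i ↦ ε * (∫⁻ x, f i x ^ p ∂μ + ∫⁻ x, g i x ^ p ∂μ) +
      C * ((∫⁻ x, f i x ^ p ∂μ + ∫⁻ x, g i x ^ p ∂μ) / 2)) l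
      (𝓝 (ε * (modulus μ p M + modulus μ p M) + C * modulus μ p M)) := by
    have halves := ENNReal.Tendsto.div_const energies (b := 2) (Or.inr two_ne_zero)
    rw [ENNReal.add_div, ENNReal.add_halves] at halves
    exact (ENNReal.Tendsto.const_mul energies (Or.inr coe_ne_top)).add
      (ENNReal.Tendsto.const_mul halves (Or.inr coe_ne_top))
  have hCm : C * modulus μ p M ≠ ⊤ := by finiteness
  filter_upwards [upper.eventually_lt_const (ENNReal.add_lt_add_right hCm hε_lt)] with i hi
  refine (ENNReal.add_le_add_iff_right hCm).1 ?_
  calc ∫⁻ x, edist (f i x) (g i x) ^ p ∂μ + C * modulus μ p M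
      ≤ ∫⁻ x, edist (f i x) (g i x) ^ p ∂μ + C * ∫⁻ x, ((f i x + g i x) / 2) ^ p ∂μ := by
        gcongr; exact modulus_le_lintegral ((hf i).midpoint (hg i))
    _ ≤ _ := hC _ _ (hf i).1 (hg i).1
    _ ≤ e + C * modulus μ p M := hi.le

end Modulus

theorem modulus_minimizer_exists_general {X : Type*} [MeasurableSpace X] (μ : Measure X) (p : ℝ)
    (hp : 1 < p) (M : Set (Measure X)) (hM : modulus μ p M ≠ ⊤) :
    ∃ (ρs : ℕ → X → ℝ≥0∞) (ρ : X → ℝ≥0∞),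
      (∀ i, Admissible M (ρs i)) ∧ Measurable ρ ∧
      Filter.Tendsto (fun i => ∫⁻ x, max (ρs i x - ρ x) (ρ x - ρs i x) ^ p ∂μ)
        Filter.atTop (𝓝 0) ∧
      WeaklyAdmissible μ p M ρ ∧
      (∃ N ⊆ M, modulus μ p N = 0 ∧ ∀ ν ∈ M \ N,
        (∫⁻ x, ρ x ∂ν) ≠ ⊤ ∧
        Filter.Tendsto (fun i => ∫⁻ x, ρs i x ∂ν) Filter.atTop (𝓝 (∫⁻ x, ρ x ∂ν))) ∧
      (∫⁻ x, ρ x ^ p ∂μ) = modulus μ p M := by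
  obtain ⟨f, hf, energy_lim⟩ := exists_seq_admissible_tendsto_modulus hM
  obtain ⟨φ, ρ, hφ, hρ, Lp_lim, exceptional_null⟩ :=
    exists_subseq_tendsto_lintegral_edist hp.le (fun n ↦ (hf n).1) <|
      tendsto_lintegral_edist_rpow_of_tendsto_modulus hp hM (fun k ↦ hf k.1) (fun k ↦ hf k.2)
        (energy_lim.comp tendsto_fst) (energy_lim.comp tendsto_snd)
  have energy_eq : ∫⁻ x, ρ x ^ p ∂μ = modulus μ p M := tendsto_nhds_unique
    (tendsto_lintegral_rpow_of_tendsto_edist hp.le (fun k ↦ (hf (φ k)).1) hρ Lp_lim)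
    (energy_lim.comp hφ.tendsto_atTop)
  let E : Set (Measure X) := {ν | ¬ (∫⁻ x, ρ x ∂ν ≠ ⊤ ∧
    Tendsto (fun k ↦ ∫⁻ x, f (φ k) x ∂ν) atTop (𝓝 (∫⁻ x, ρ x ∂ν)))}
  have E_null : modulus μ p (M ∩ E) = 0 :=
    le_antisymm ((modulus_mono inter_subset_right).trans_eq <| modulus_setOf_not_tendsto_lintegral
      (by linarith) (fun k ↦ (hf (φ k)).1) hρ (energy_eq ▸ hM) exceptional_null) zero_le
  have regular {ν} (hν : ν ∈ M \ (M ∩ E)) : ∫⁻ x, ρ x ∂ν ≠ ⊤ ∧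
      Tendsto (fun k ↦ ∫⁻ x, f (φ k) x ∂ν) atTop (𝓝 (∫⁻ x, ρ x ∂ν)) :=
    not_not.1 fun hE ↦ hν.2 ⟨hν.1, hE⟩
  exact ⟨fun k ↦ f (φ k), ρ, fun k ↦ hf (φ k), hρ, by simpa only [edist_eq_max_tsub] using Lp_lim,
    ⟨M ∩ E, inter_subset_left, E_null, hρ, fun ν hν ↦
      ge_of_tendsto' (regular hν).2 fun k ↦ (hf (φ k)).2 ν hν.1⟩,
    ⟨M ∩ E, inter_subset_left, E_null, fun ν hν ↦ regular hν⟩, energy_eq⟩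

/-- Existence of modulus minimizers (Lemma 2.2 of Lohvansuu–Rajala, after Fuglede and Mazur). -/
theorem modulus_minimizer_exists {X : Type*} [MetricSpace X] [MeasurableSpace X]
    (μ : Measure X) (hBR : BorelRegular μ) (p : ℝ) (hp : 1 < p)
    (M : Set (Measure X)) (hM : modulus μ p M ≠ ⊤) :
    ∃ (ρs : ℕ → X → ℝ≥0∞) (ρ : X → ℝ≥0∞),
      (∀ i, Admissible M (ρs i)) ∧ Measurable ρ ∧
      Filter.Tendsto (fun i => ∫⁻ x, max (ρs i x - ρ x) (ρ x - ρs i x) ^ p ∂μ)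
        Filter.atTop (𝓝 0) ∧
      WeaklyAdmissible μ p M ρ ∧
      (∃ N ⊆ M, modulus μ p N = 0 ∧ ∀ ν ∈ M \ N,
        (∫⁻ x, ρ x ∂ν) ≠ ⊤ ∧
        Filter.Tendsto (fun i => ∫⁻ x, ρs i x ∂ν) Filter.atTop (𝓝 (∫⁻ x, ρ x ∂ν))) ∧
      (∫⁻ x, ρ x ^ p ∂μ) = modulus μ p M :=
  modulus_minimizer_exists_general μ p hp M hM
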